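/- Let p be a prime. For k ≥ 0 define L_p^{(k)} : V(ℤ_p) → {0,1} by L_p^{(k)}(f) = 1 if and only if there exists a ℚ_p-soluble g ∈ V(ℤ_p) with g ≡ f (mod p^{2k}V(ℤ_p)); set ℓ_p^{(0)} := L_p^{(0)} and ℓ_p^{(k)} := L_p^{(k)} − L_p^{(k−1)} for k ≥ 1. Then: (i) L_p^{(0)} ≡ 1 and each |ℓ_p^{(k)}| ≤ 1; (ii) each ℓ_p^{(k)} factors through reduction modulo p^{2k} and is PGL₂(ℤ_p)-invariant; (iii) for every f ∈ V(ℤ_p) with Δ(f) ≠ 0, ℓ_p(f) = Σ_{k≥0} ℓ_p^{(k)}(f), where ℓ_p(f) = 1 if f is ℚ_p-soluble and ℓ_p(f) = 0 otherwise; and (iv) for k ≥ 1, if ℓ_p^{(k)}(f) ≠ 0 then p^{2k} divides Δ(f) when p is odd, and 2^{2k−2} divides Δ(f) when p = 2. -/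

import Mathlib

noncomputable section

namespace BQPaper

/-- A binary quartic form `a x⁴ + b x³y + c x²y² + d xy³ + e y⁴` over `R`,
recorded by its coefficients. -/
structure BQ (R : Type*) where
  a : R
  b : R
  c : R
  d : R
  e : R

/-- A 2×2 matrix `!![p, q; r, s]`, recorded by its entries. -/
structure Mat2 (R : Type*) where
  p : R
  q : R
  r : R
  s : R

variable {R S : Type*} [CommRing R] [CommRing S]

def Mat2.det (m : Mat2 R) : R := m.p * m.s - m.q * m.r

/-- Matrix product. -/
def Mat2.mul (m n : Mat2 R) : Mat2 R :=
  ⟨m.p * n.p + m.q * n.r, m.p * n.q + m.q * n.s,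
   m.r * n.p + m.s * n.r, m.r * n.q + m.s * n.s⟩

/-- Scalar multiple of a matrix. -/
def Mat2.smul (z : R) (m : Mat2 R) : Mat2 R := ⟨z * m.p, z * m.q, z * m.r, z * m.s⟩

def Mat2.map (φ : R →+* S) (m : Mat2 R) : Mat2 S := ⟨φ m.p, φ m.q, φ m.r, φ m.s⟩

/-- Evaluation of a binary quartic form at `(x, y)`. -/
def BQ.eval (f : BQ R) (x y : R) : R :=
  f.a * x ^ 4 + f.b * x ^ 3 * y + f.c * x ^ 2 * y ^ 2 + f.d * x * y ^ 3 + f.e * y ^ 4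

/-- The invariant `I(f) = 12ae − 3bd + c²`. -/
def BQ.invI (f : BQ R) : R := 12 * f.a * f.e - 3 * f.b * f.d + f.c ^ 2

/-- The invariant `J(f) = 72ace + 9bcd − 27ad² − 27eb² − 2c³`. -/
def BQ.invJ (f : BQ R) : R :=
  72 * f.a * f.c * f.e + 9 * f.b * f.c * f.d - 27 * f.a * f.d ^ 2
    - 27 * f.e * f.b ^ 2 - 2 * f.c ^ 3

/-- The discriminant of a binary quartic form; one has `Δ = (4I³ − J²)/27`. -/
def BQ.disc (f : BQ R) : R :=
  256 * f.a ^ 3 * f.e ^ 3 - 192 * f.a ^ 2 * f.b * f.d * f.e ^ 2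
    - 128 * f.a ^ 2 * f.c ^ 2 * f.e ^ 2 + 144 * f.a ^ 2 * f.c * f.d ^ 2 * f.e
    - 27 * f.a ^ 2 * f.d ^ 4 + 144 * f.a * f.b ^ 2 * f.c * f.e ^ 2
    - 6 * f.a * f.b ^ 2 * f.d ^ 2 * f.e - 80 * f.a * f.b * f.c ^ 2 * f.d * f.e
    + 18 * f.a * f.b * f.c * f.d ^ 3 + 16 * f.a * f.c ^ 4 * f.e
    - 4 * f.a * f.c ^ 3 * f.d ^ 2 - 27 * f.b ^ 4 * f.e ^ 2
    + 18 * f.b ^ 3 * f.c * f.d * f.e - 4 * f.b ^ 3 * f.d ^ 3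
    - 4 * f.b ^ 2 * f.c ^ 3 * f.e + f.b ^ 2 * f.c ^ 2 * f.d ^ 2

/-- Multiplication of all coefficients of a form by a scalar. -/
def BQ.rsmul (t : R) (f : BQ R) : BQ R := ⟨t * f.a, t * f.b, t * f.c, t * f.d, t * f.e⟩

/-- Substitution action of a 2×2 matrix on binary quartic forms:
`(m • f)(x,y) = f((x,y)·m) = f(px + ry, qx + sy)` for `m = !![p, q; r, s]`. -/
def BQ.subst (m : Mat2 R) (f : BQ R) : BQ R where
  a := f.a * m.p ^ 4 + f.b * m.p ^ 3 * m.q + f.c * m.p ^ 2 * m.q ^ 2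
      + f.d * m.p * m.q ^ 3 + f.e * m.q ^ 4
  b := 4 * f.a * m.p ^ 3 * m.r + f.b * m.p ^ 3 * m.s + 3 * f.b * m.p ^ 2 * m.q * m.r
      + 2 * f.c * m.p ^ 2 * m.q * m.s + 2 * f.c * m.p * m.q ^ 2 * m.r
      + 3 * f.d * m.p * m.q ^ 2 * m.s + f.d * m.q ^ 3 * m.r + 4 * f.e * m.q ^ 3 * m.s
  c := 6 * f.a * m.p ^ 2 * m.r ^ 2 + 3 * f.b * m.p ^ 2 * m.r * m.s
      + 3 * f.b * m.p * m.q * m.r ^ 2 + f.c * m.p ^ 2 * m.s ^ 2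
      + 4 * f.c * m.p * m.q * m.r * m.s + f.c * m.q ^ 2 * m.r ^ 2
      + 3 * f.d * m.p * m.q * m.s ^ 2 + 3 * f.d * m.q ^ 2 * m.r * m.s
      + 6 * f.e * m.q ^ 2 * m.s ^ 2
  d := 4 * f.a * m.p * m.r ^ 3 + 3 * f.b * m.p * m.r ^ 2 * m.s + f.b * m.q * m.r ^ 3
      + 2 * f.c * m.p * m.r * m.s ^ 2 + 2 * f.c * m.q * m.r ^ 2 * m.s
      + f.d * m.p * m.s ^ 3 + 3 * f.d * m.q * m.r * m.s ^ 2 + 4 * f.e * m.q * m.s ^ 3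
  e := f.a * m.r ^ 4 + f.b * m.r ^ 3 * m.s + f.c * m.r ^ 2 * m.s ^ 2
      + f.d * m.r * m.s ^ 3 + f.e * m.s ^ 4

/-- The twisted action `(γ·f)(x,y) = f((x,y)·γ)/det(γ)²`, which descends to `PGL₂`.
(`Ring.inverse` is the genuine inverse when `det` is a unit.) -/
def BQ.twist (m : Mat2 R) (f : BQ R) : BQ R :=
  BQ.rsmul (Ring.inverse m.det ^ 2) (f.subst m)

/-- Coefficientwise map of forms along a ring homomorphism. -/
def BQ.map (φ : R →+* S) (f : BQ R) : BQ S := ⟨φ f.a, φ f.b, φ f.c, φ f.d, φ f.e⟩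

end BQPaper

namespace BQPaper

open scoped Classical

variable {p : ℕ} [Fact p.Prime]

/-- A binary quartic form `f` over `ℤ_p` is `ℚ_p`-soluble if `z² = f(x,y)` has a
solution with `(x,y) ≠ (0,0)` in `ℚ_p`. -/
def SolubleP (f : BQ ℤ_[p]) : Prop :=
  ∃ x y z : ℚ_[p], ¬(x = 0 ∧ y = 0) ∧ z ^ 2 = (f.map (PadicInt.Coe.ringHom)).eval x y

/-- The characteristic function of local solubility. -/
def ellP (f : BQ ℤ_[p]) : ℝ := if SolubleP f then 1 else 0

/-- Coefficientwise congruence `f ≡ g (mod p^j V(ℤ_p))`. -/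
def CongMod (j : ℕ) (f g : BQ ℤ_[p]) : Prop :=
  (p : ℤ_[p]) ^ j ∣ (f.a - g.a) ∧ (p : ℤ_[p]) ^ j ∣ (f.b - g.b) ∧
  (p : ℤ_[p]) ^ j ∣ (f.c - g.c) ∧ (p : ℤ_[p]) ^ j ∣ (f.d - g.d) ∧
  (p : ℤ_[p]) ^ j ∣ (f.e - g.e)

/-- `L_p^{(k)}(f) = 1` iff some `g ≡ f (mod p^{2k})` is `ℚ_p`-soluble. -/
def LP (k : ℕ) (f : BQ ℤ_[p]) : ℝ :=
  if ∃ g : BQ ℤ_[p], SolubleP g ∧ CongMod (2 * k) f g then 1 else 0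

/-- `ℓ_p^{(0)} = L_p^{(0)}` and `ℓ_p^{(k)} = L_p^{(k)} − L_p^{(k−1)}` for `k ≥ 1`. -/
def ellPk : ℕ → BQ ℤ_[p] → ℝ
  | 0, f => LP 0 f
  | (k + 1), f => LP (k + 1) f - LP k f

attribute [ext] BQ

/-!
Suppose that `f` is insoluble but congruent modulo `p ^ (2n)` to a soluble form. After a
unimodular substitution the leading coefficient `a` of `f` is congruent to a square `z²` modulo
`p ^ (2n)`. By Hensel's lemma the partial derivatives `2z` and `b` at this approximate solution
must be small, which for odd `p` and `n ≥ 1` gives `p ^ (2n) ∣ a` and `p ^ n ∣ b`. Rescaling `y`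
by `p ^ n` turns the lowest order part of `f` into a conic, which must be singular modulo `p`; a
second conic appears at the opposite end of `f`, and the two degeneracies together force
`p ^ (2n + 2) ∣ Δ(f)`. If `n = 0` it may also happen that `f` takes no square value modulo `p`;
then `f` modulo `p` is a constant times the square of a quadratic form, so `p² ∣ Δ(f)`. For
`p = 2` the Hensel bounds alone give `2 ^ (2n) ∣ Δ(f)`.

If `Δ(f) ≠ 0`, such divisibilities hold for finitely many `n` only, so `L_p^{(k)}(f)`, which is
the `k`-th partial sum of the series, is eventually equal to `ℓ_p(f)`.
-/

section BinaryQuartic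

variable {R S : Type*} [CommRing R] [CommRing S]

/-- The adjugate of a `2 × 2` matrix; it represents the inverse in `PGL₂`. -/
def Mat2.adjugate (m : Mat2 R) : Mat2 R := ⟨m.s, -m.q, -m.r, m.p⟩

theorem Mat2.det_adjugate (m : Mat2 R) : m.adjugate.det = m.det := by
  simp only [Mat2.adjugate, Mat2.det]; ring

namespace BQ

theorem map_subst (φ : R →+* S) (m : Mat2 R) (f : BQ R) :
    (f.subst m).map φ = (f.map φ).subst (m.map φ) := by
  ext <;> simp [map, subst, Mat2.map, map_ofNat]

theorem map_rsmul (φ : R →+* S) (t : R) (f : BQ R) :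
    (f.rsmul t).map φ = (f.map φ).rsmul (φ t) := by
  ext <;> simp [map, rsmul]

theorem eval_map (φ : R →+* S) (f : BQ R) (x y : R) :
    (f.map φ).eval (φ x) (φ y) = φ (f.eval x y) := by
  simp [map, eval]

theorem eval_subst (m : Mat2 R) (f : BQ R) (x y : R) :
    (f.subst m).eval x y = f.eval (m.p * x + m.r * y) (m.q * x + m.s * y) := by
  simp only [eval, subst]; ring

theorem eval_rsmul (t : R) (f : BQ R) (x y : R) : (f.rsmul t).eval x y = t * f.eval x y := by
  simp only [eval, rsmul]; ring

theorem subst_a (m : Mat2 R) (f : BQ R) : (f.subst m).a = f.eval m.p m.q := rfl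

theorem eval_one_zero (f : BQ R) : f.eval 1 0 = f.a := by
  simp [eval]

theorem subst_one (f : BQ R) : f.subst ⟨1, 0, 0, 1⟩ = f := by
  ext <;> simp [subst]

theorem subst_swap (f : BQ R) : f.subst ⟨0, 1, 1, 0⟩ = ⟨f.e, f.d, f.c, f.b, f.a⟩ := by
  ext <;> simp [subst]

theorem rsmul_one (f : BQ R) : f.rsmul 1 = f := by
  simp [rsmul]

theorem rsmul_rsmul (s t : R) (f : BQ R) : (f.rsmul t).rsmul s = f.rsmul (s * t) := by
  simp [rsmul, mul_assoc]

theorem subst_rsmul (t : R) (m : Mat2 R) (f : BQ R) :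
    (f.rsmul t).subst m = (f.subst m).rsmul t := by
  ext <;> simp only [rsmul, subst] <;> ring

theorem subst_adjugate (m : Mat2 R) (f : BQ R) :
    (f.subst m).subst m.adjugate = f.rsmul (m.det ^ 4) := by
  ext <;> simp only [rsmul, subst, Mat2.adjugate, Mat2.det] <;> ring

theorem twist_subst_adjugate {m : Mat2 R} (hm : IsUnit m.det) (f : BQ R) :
    (f.twist m).subst m.adjugate = f.rsmul (m.det ^ 2) := by
  rw [twist, subst_rsmul, subst_adjugate, rsmul_rsmul]
  congr 1
  linear_combination (m.det ^ 2 * (Ring.inverse m.det * m.det + 1)) *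
    Ring.inverse_mul_cancel _ hm

theorem twist_twist_adjugate {m : Mat2 R} (hm : IsUnit m.det) (f : BQ R) :
    (f.twist m).twist m.adjugate = f := by
  rw [twist, twist_subst_adjugate hm, rsmul_rsmul, Mat2.det_adjugate, ← mul_pow,
    Ring.inverse_mul_cancel _ hm, one_pow, rsmul_one]

theorem invI_subst (m : Mat2 R) (f : BQ R) : (f.subst m).invI = m.det ^ 4 * f.invI := by
  simp only [invI, subst, Mat2.det]; ring

theorem invJ_subst (m : Mat2 R) (f : BQ R) : (f.subst m).invJ = m.det ^ 6 * f.invJ := by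
  simp only [invJ, subst, Mat2.det]; ring

theorem twentyseven_mul_disc (f : BQ R) : 27 * f.disc = 4 * f.invI ^ 3 - f.invJ ^ 2 := by
  simp only [disc, invI, invJ]; ring

theorem disc_subst [IsDomain R] [CharZero R] (m : Mat2 R) (f : BQ R) :
    (f.subst m).disc = m.det ^ 12 * f.disc := by
  apply mul_left_cancel₀ (show (27 : R) ≠ 0 by norm_num)
  rw [twentyseven_mul_disc, invI_subst, invJ_subst]
  linear_combination (-m.det ^ 12) * twentyseven_mul_disc f

theorem disc_subst_of_det_eq_one [IsDomain R] [CharZero R] {m : Mat2 R} (hm : m.det = 1)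
    (f : BQ R) : (f.subst m).disc = f.disc := by
  rw [disc_subst, hm, one_pow, one_mul]

/-- The terms are grouped by the two quadratic factors that `f` has to lowest order when `a` and
`b` are small: `c x² + d x y + e y²` and `a x² + b x y + c y²`. -/
theorem disc_eq_of_outer_quadratics (f : BQ R) :
    f.disc = f.c ^ 2 * ((f.b ^ 2 - 4 * f.a * f.c) * (f.d ^ 2 - 4 * f.c * f.e))
      + (2 * f.c * f.d * f.e) * (f.b * (f.b ^ 2 - 4 * f.a * f.c))
      - (4 * f.d * (f.d ^ 2 - 4 * f.c * f.e)) * (f.b * (f.b ^ 2 - 4 * f.a * f.c))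
      + f.c * (2 * f.a * f.b * f.d * (f.d ^ 2 - 4 * f.c * f.e))
      + (16 * f.a * f.e ^ 3 - 12 * f.b * f.d * f.e ^ 2 - 8 * f.c ^ 2 * f.e ^ 2
          + 9 * f.c * f.d ^ 2 * f.e) * (16 * f.a ^ 2)
      - 27 * (f.a ^ 2 * f.d ^ 4)
      + (144 * f.c * f.e ^ 2 - 6 * f.d ^ 2 * f.e) * (f.a * f.b ^ 2)
      - (27 * f.e ^ 2) * f.b ^ 4 := by
  simp only [disc]; ring

theorem dvd_disc {f : BQ R} {M : R}
    (h₁ : M ∣ (f.b ^ 2 - 4 * f.a * f.c) * (f.d ^ 2 - 4 * f.c * f.e))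
    (h₂ : M ∣ f.b * (f.b ^ 2 - 4 * f.a * f.c))
    (h₃ : M ∣ 2 * f.a * f.b * f.d * (f.d ^ 2 - 4 * f.c * f.e))
    (h₄ : M ∣ 16 * f.a ^ 2) (h₅ : M ∣ f.a ^ 2 * f.d ^ 4) (h₆ : M ∣ f.a * f.b ^ 2)
    (h₇ : M ∣ f.b ^ 4) : M ∣ f.disc := by
  rw [disc_eq_of_outer_quadratics]
  exact dvd_sub (dvd_add (dvd_sub (dvd_add (dvd_add (dvd_sub (dvd_add (h₁.mul_left _)
    (h₂.mul_left _)) (h₂.mul_left _)) (h₃.mul_left _)) (h₄.mul_left _)) (h₅.mul_left _))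
    (h₆.mul_left _)) (h₇.mul_left _)

theorem sq_dvd_disc_of_outer_quadratics {f : BQ R} {q P : R} (ha : q * P ∣ f.a) (hb : P ∣ f.b)
    (hqb : q ∣ f.b) (hbac : q * P ^ 2 ∣ f.b ^ 2 - 4 * f.a * f.c)
    (hdce : q ∣ f.d ^ 2 - 4 * f.c * f.e) : (q * P) ^ 2 ∣ f.disc := by
  have ha2 : (q * P) ^ 2 ∣ f.a ^ 2 := pow_dvd_pow_of_dvd ha 2
  have hb2 : q * P ∣ f.b ^ 2 := sq f.b ▸ mul_dvd_mul hqb hb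
  refine dvd_disc ?_ ?_ ?_ (ha2.mul_left _) (ha2.mul_right _) ?_ ?_
  · convert mul_dvd_mul hbac hdce using 1
    ring
  · convert mul_dvd_mul hqb hbac using 1
    ring
  · convert (mul_dvd_mul (mul_dvd_mul ha hb) hdce).mul_left (2 * f.d) using 1 <;> ring
  · exact sq (q * P) ▸ mul_dvd_mul ha hb2
  · exact (pow_dvd_pow_of_dvd hb2 2).trans (by rw [← pow_mul])

theorem two_mul_sq_dvd_disc {f : BQ R} {P : R} (ha : P ^ 2 ∣ f.a) (hb : 2 * P ∣ f.b)
    (hd : 2 ∣ f.d) : (2 * P) ^ 2 ∣ f.disc := by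
  obtain ⟨w, ha⟩ := ha
  obtain ⟨v, hb⟩ := hb
  obtain ⟨u, hd⟩ := hd
  apply dvd_disc <;> simp only [ha, hb, hd]
  · exact ⟨(v ^ 2 - w * f.c) * (4 * u ^ 2 - 4 * f.c * f.e), by ring⟩
  · exact ⟨2 * P * v * (v ^ 2 - w * f.c), by ring⟩
  · exact ⟨2 * P * w * v * u * (4 * u ^ 2 - 4 * f.c * f.e), by ring⟩
  · exact ⟨4 * P ^ 2 * w ^ 2, by ring⟩
  · exact ⟨4 * P ^ 2 * w ^ 2 * u ^ 4, by ring⟩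
  · exact ⟨P ^ 2 * w * v ^ 2, by ring⟩
  · exact ⟨4 * P ^ 2 * v ^ 4, by ring⟩

theorem sq_dvd_disc_of_depressed {f : BQ R} {q : R} (hb : f.b = 0) (hd : q ∣ f.d)
    (hace : q ∣ f.c ^ 2 - 4 * f.a * f.e) : q ^ 2 ∣ f.disc := by
  have key : f.disc = 16 * f.a * f.e * (f.c ^ 2 - 4 * f.a * f.e) ^ 2
      + (144 * f.a ^ 2 * f.c * f.e - 27 * f.a ^ 2 * f.d ^ 2 - 4 * f.a * f.c ^ 3) * f.d ^ 2 := by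
    simp only [disc, hb]; ring
  rw [key]
  exact dvd_add ((pow_dvd_pow_of_dvd hace 2).mul_left _) ((pow_dvd_pow_of_dvd hd 2).mul_left _)

end BQ

end BinaryQuartic

section FiniteField

variable {K : Type*} [Field K]

theorem card_quadratic_zeros_le_two {α β γ : K} (hα : α ≠ 0) (s : Finset K)
    (hs : ∀ x ∈ s, α * x ^ 2 + β * x + γ = 0) : s.card ≤ 2 := by
  by_contra! hcard
  obtain ⟨x, hx, y, hy, z, hz, hxy, hxz, hyz⟩ := Finset.two_lt_card.mp hcard
  have hsum {w : K} (hw : w ∈ s) (hxw : x ≠ w) : α * (x + w) + β = 0 :=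
    mul_left_cancel₀ (sub_ne_zero.mpr hxw) (by linear_combination hs x hx - hs w hw)
  exact hyz (mul_left_cancel₀ hα (by linear_combination hsum hy hxy - hsum hz hxz))

theorem card_linear_zeros_le_one {δ ε : K} (h : ¬ (δ = 0 ∧ ε = 0)) (s : Finset K)
    (hs : ∀ x ∈ s, δ * x + ε = 0) : s.card ≤ 1 := by
  refine Finset.card_le_one.mpr fun x hx y hy => ?_
  by_contra hxy
  have hδ : δ = 0 := by
    refine (mul_eq_zero.mp ?_).resolve_right (sub_ne_zero.mpr hxy)
    linear_combination hs x hx - hs y hy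
  exact h ⟨hδ, by simpa [hδ] using hs x hx⟩

variable [Finite K]

theorem isSquare_mul_of_not_isSquare {a b : K} (ha : ¬ IsSquare a) (hb : ¬ IsSquare b) :
    IsSquare (a * b) := by
  have := Fintype.ofFinite K
  have ha0 : a ≠ 0 := by rintro rfl; exact ha .zero
  have hb0 : b ≠ 0 := by rintro rfl; exact hb .zero
  rw [← quadraticChar_one_iff_isSquare (mul_ne_zero ha0 hb0), map_mul,
    quadraticChar_neg_one_iff_not_isSquare.mpr ha, quadraticChar_neg_one_iff_not_isSquare.mpr hb]
  norm_num

/-- Put `y = u + (x² + βx + γ)` in `y² = (x² + βx + γ)² + δx + ε`. Each `x` gives two values of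
`u`, while each `u` gives at most two values of `x`, and at most one if `u = 0`; so there are both
`2q` and fewer than `2q` solutions `(x, u)`. -/
theorem linear_eq_zero_of_forall_sq_add_linear_eq_sq (hK : ringChar K ≠ 2) {β γ δ ε : K}
    (h : ∀ x, ∃ y ≠ 0, (x ^ 2 + β * x + γ) ^ 2 + δ * x + ε = y ^ 2) : δ = 0 ∧ ε = 0 := by
  classical
  have := Fintype.ofFinite K
  have h2 : (2 : K) ≠ 0 := Ring.two_ne_zero hK
  by_contra hlin
  let r (x u : K) : Prop := u ^ 2 + 2 * u * (x ^ 2 + β * x + γ) = δ * x + ε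
  have two_le (x : K) : 2 ≤ (Finset.univ.bipartiteAbove r x).card := by
    obtain ⟨y, hy, hxy⟩ := h x
    have hne : y - (x ^ 2 + β * x + γ) ≠ -y - (x ^ 2 + β * x + γ) := fun heq =>
      mul_ne_zero h2 hy (by linear_combination heq)
    rw [← Finset.card_pair hne]
    refine Finset.card_le_card fun u hu => (Finset.mem_bipartiteAbove r).mpr ⟨Finset.mem_univ u, ?_⟩
    rcases Finset.mem_insert.mp hu with rfl | hu
    · linear_combination -hxy
    · rw [Finset.mem_singleton.mp hu]
      linear_combination -hxy
  have le_two (u : K) (hu : u ≠ 0) : (Finset.univ.bipartiteBelow r u).card ≤ 2 := by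
    refine card_quadratic_zeros_le_two (β := 2 * u * β - δ) (γ := u ^ 2 + 2 * u * γ - ε)
      (mul_ne_zero h2 hu) _ fun x hx => ?_
    linear_combination ((Finset.mem_bipartiteBelow r).mp hx).2
  have le_one : (Finset.univ.bipartiteBelow r 0).card ≤ 1 :=
    card_linear_zeros_le_one hlin _ fun x hx => by
      linear_combination -((Finset.mem_bipartiteBelow r).mp hx).2
  have hlt : ∑ u, (Finset.univ.bipartiteBelow r u).card < ∑ _u : K, 2 := by
    refine Finset.sum_lt_sum (fun u _ => ?_) ⟨0, Finset.mem_univ 0, by lia⟩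
    rcases eq_or_ne u 0 with rfl | hu
    · lia
    · exact le_two u hu
  rw [← Finset.sum_card_bipartiteAbove_eq_sum_card_bipartiteBelow] at hlt
  exact hlt.not_ge (Finset.sum_le_sum fun x _ => two_le x)

/-- A quartic without `x³` term that takes no square value, even at infinity, is a constant times
the square of a quadratic polynomial. -/
theorem depressed_quartic_of_forall_not_isSquare (hK : ringChar K ≠ 2) {a c d e : K}
    (ha : ¬ IsSquare a) (h : ∀ x, ¬ IsSquare (a * x ^ 4 + c * x ^ 2 + d * x + e)) :
    d = 0 ∧ c ^ 2 = 4 * a * e := by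
  have h2 : (2 : K) ≠ 0 := Ring.two_ne_zero hK
  have ha0 : a ≠ 0 := by rintro rfl; exact ha .zero
  obtain ⟨hδ, hε⟩ : d / a = 0 ∧ e / a - (c / (2 * a)) ^ 2 = 0 := by
    refine linear_eq_zero_of_forall_sq_add_linear_eq_sq hK (β := 0) (γ := c / (2 * a)) fun x => ?_
    obtain ⟨y, hy⟩ := isSquare_mul_of_not_isSquare ha (h x)
    refine ⟨y / a, ?_, ?_⟩
    · rintro hya
      have hy0 : y = 0 := by simpa [ha0] using hya
      rw [hy0, zero_mul, mul_eq_zero] at hy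
      exact h x (by rw [hy.resolve_left ha0]; exact .zero)
    · field_simp
      linear_combination 4 * hy
  have hd : d = 0 := by simpa [ha0] using hδ
  refine ⟨hd, ?_⟩
  field_simp at hε
  linear_combination -hε

theorem exists_quadratic_eq_sq (hK : ringChar K ≠ 2) {α β γ : K} (h : β ^ 2 - 4 * α * γ ≠ 0) :
    ∃ t z : K, α + β * t + γ * t ^ 2 = z ^ 2 := by
  have := Fintype.ofFinite K
  rcases eq_or_ne γ 0 with rfl | hγ
  · have hβ : β ≠ 0 := by rintro rfl; simp at h
    exact ⟨-α / β, 0, by field_simp; ring⟩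
  · obtain ⟨t, z, htz⟩ := FiniteField.exists_root_sum_quadratic
      (f := .C γ * .X ^ 2 + .C β * .X + .C α) (g := .C (-1) * .X ^ 2 + .C 0 * .X + .C 0)
      (Polynomial.degree_quadratic hγ) (Polynomial.degree_quadratic (by simp))
      (FiniteField.odd_card_of_char_ne_two hK)
    refine ⟨t, z, ?_⟩
    simp only [map_neg, map_one, map_zero, Polynomial.eval_add, Polynomial.eval_mul,
      Polynomial.eval_C, Polynomial.eval_pow, Polynomial.eval_X, Polynomial.eval_neg,
      Polynomial.eval_one, Polynomial.eval_zero] at htz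
    linear_combination htz

end FiniteField

section Congruence

theorem congMod_iff_map_eq {j : ℕ} {f g : BQ ℤ_[p]} :
    CongMod j f g ↔ f.map (PadicInt.toZModPow j) = g.map (PadicInt.toZModPow j) := by
  simp only [CongMod, ← Ideal.mem_span_singleton, ← PadicInt.ker_toZModPow,
    RingHom.sub_mem_ker_iff, BQ.ext_iff, BQ.map]

theorem CongMod.symm {j : ℕ} {f g : BQ ℤ_[p]} (h : CongMod j f g) : CongMod j g f :=
  congMod_iff_map_eq.mpr (congMod_iff_map_eq.mp h).symm

theorem CongMod.trans {j : ℕ} {f g h : BQ ℤ_[p]} (hfg : CongMod j f g) (hgh : CongMod j g h) :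
    CongMod j f h :=
  congMod_iff_map_eq.mpr ((congMod_iff_map_eq.mp hfg).trans (congMod_iff_map_eq.mp hgh))

theorem CongMod.mono {i j : ℕ} (hij : i ≤ j) {f g : BQ ℤ_[p]} (h : CongMod j f g) :
    CongMod i f g :=
  have hp := pow_dvd_pow (p : ℤ_[p]) hij
  ⟨hp.trans h.1, hp.trans h.2.1, hp.trans h.2.2.1, hp.trans h.2.2.2.1, hp.trans h.2.2.2.2⟩

theorem CongMod.subst {j : ℕ} {f g : BQ ℤ_[p]} (h : CongMod j f g) (m : Mat2 ℤ_[p]) :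
    CongMod j (f.subst m) (g.subst m) := by
  rw [congMod_iff_map_eq] at h ⊢
  rw [BQ.map_subst, BQ.map_subst, h]

theorem CongMod.twist {j : ℕ} {f g : BQ ℤ_[p]} (h : CongMod j f g) (m : Mat2 ℤ_[p]) :
    CongMod j (f.twist m) (g.twist m) := by
  have hm := h.subst m
  rw [congMod_iff_map_eq] at hm ⊢
  rw [BQ.twist, BQ.twist, BQ.map_rsmul, BQ.map_rsmul, hm]

end Congruence

section Solubility

theorem SolubleP.of_eval_eq_sq {f : BQ ℤ_[p]} {x y z : ℤ_[p]} (hxy : ¬ (x = 0 ∧ y = 0))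
    (h : f.eval x y = z ^ 2) : SolubleP f := by
  refine ⟨x, y, z, by simpa using hxy, ?_⟩
  have := BQ.eval_map PadicInt.Coe.ringHom f x y
  rw [h, map_pow] at this
  exact this.symm

theorem exists_eval_eq_sq_of_eval_coe_eq_sq {f : BQ ℤ_[p]} {x y : ℤ_[p]} {z : ℚ_[p]}
    (h : (f.map PadicInt.Coe.ringHom).eval (x : ℚ_[p]) y = z ^ 2) :
    ∃ w : ℤ_[p], f.eval x y = w ^ 2 := by
  replace h : (f.eval x y : ℚ_[p]) = z ^ 2 := (BQ.eval_map PadicInt.Coe.ringHom f x y).symm.trans h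
  have hz : ‖z‖ ≤ 1 := by
    rw [← pow_le_one_iff_of_nonneg (norm_nonneg z) two_ne_zero, ← norm_pow, ← h]
    exact (f.eval x y).norm_le_one
  exact ⟨⟨z, hz⟩, PadicInt.ext h⟩

theorem exists_coe_eq_div {x y : ℚ_[p]} (h : ‖y‖ ≤ ‖x‖) : ∃ t : ℤ_[p], (t : ℚ_[p]) = y / x :=
  ⟨⟨y / x, by rw [norm_div]; exact div_le_one_of_le₀ h (norm_nonneg x)⟩, rfl⟩

theorem solubleP_iff_exists_subst_a_eq_sq {f : BQ ℤ_[p]} :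
    SolubleP f ↔ ∃ m : Mat2 ℤ_[p], m.det = 1 ∧ ∃ z, (f.subst m).a = z ^ 2 := by
  constructor
  · rintro ⟨x, y, z, hxy, hz⟩
    rcases le_total ‖y‖ ‖x‖ with hyx | hyx
    · have hx : x ≠ 0 := by
        rintro rfl
        exact hxy ⟨rfl, by simpa using hyx⟩
      obtain ⟨t, ht⟩ := exists_coe_eq_div hyx
      refine ⟨⟨1, t, 0, 1⟩, by simp [Mat2.det], ?_⟩
      refine exists_eval_eq_sq_of_eval_coe_eq_sq (z := z / x ^ 2) ?_
      rw [div_pow, hz]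
      simp only [BQ.eval, PadicInt.coe_one, ht]
      field_simp
    · have hy : y ≠ 0 := by
        rintro rfl
        exact hxy ⟨by simpa using hyx, rfl⟩
      obtain ⟨t, ht⟩ := exists_coe_eq_div hyx
      refine ⟨⟨t, 1, -1, 0⟩, by simp [Mat2.det], ?_⟩
      refine exists_eval_eq_sq_of_eval_coe_eq_sq (z := z / y ^ 2) ?_
      rw [div_pow, hz]
      simp only [BQ.eval, PadicInt.coe_one, ht]
      field_simp
  · rintro ⟨m, hm, z, hz⟩
    refine SolubleP.of_eval_eq_sq ?_ hz
    rintro ⟨hp, hq⟩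
    simp [Mat2.det, hp, hq] at hm

theorem SolubleP.of_subst_eq_rsmul_sq {f g : BQ ℤ_[p]} {m : Mat2 ℤ_[p]} (hm : m.det ≠ 0)
    {r : ℤ_[p]} (h : f.subst m = g.rsmul (r ^ 2)) (hg : SolubleP g) : SolubleP f := by
  obtain ⟨n, hn, z, hz⟩ := solubleP_iff_exists_subst_a_eq_sq.mp hg
  refine .of_eval_eq_sq (x := m.p * n.p + m.r * n.q) (y := m.q * n.p + m.s * n.q) (z := r * z) ?_ ?_
  · rintro ⟨hx, hy⟩
    have hp : n.p = 0 := (mul_eq_zero.mp (by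
      simp only [Mat2.det]; linear_combination m.s * hx - m.r * hy)).resolve_left hm
    have hq : n.q = 0 := (mul_eq_zero.mp (by
      simp only [Mat2.det]; linear_combination m.p * hy - m.q * hx)).resolve_left hm
    simp [Mat2.det, hp, hq] at hn
  · rw [← BQ.eval_subst, h, BQ.eval_rsmul, mul_pow, ← hz, BQ.subst_a]

theorem SolubleP.of_subst {f : BQ ℤ_[p]} {m : Mat2 ℤ_[p]} (hm : m.det ≠ 0)
    (h : SolubleP (f.subst m)) : SolubleP f :=
  h.of_subst_eq_rsmul_sq hm (r := 1) (by rw [one_pow, BQ.rsmul_one])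

theorem SolubleP.twist {f : BQ ℤ_[p]} (h : SolubleP f) {m : Mat2 ℤ_[p]} (hm : IsUnit m.det) :
    SolubleP (f.twist m) :=
  h.of_subst_eq_rsmul_sq (m.det_adjugate.trans_ne hm.ne_zero) (BQ.twist_subst_adjugate hm f)

/-- Solubility modulo `p ^ j`: the condition defining `L_p^{(k)}`, for an arbitrary exponent `j`
in place of `2k`. -/
def SolubleMod (j : ℕ) (f : BQ ℤ_[p]) : Prop :=
  ∃ g, SolubleP g ∧ CongMod j f g

theorem SolubleP.solubleMod {f : BQ ℤ_[p]} (h : SolubleP f) (j : ℕ) : SolubleMod j f :=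
  ⟨f, h, congMod_iff_map_eq.mpr rfl⟩

theorem solubleMod_zero (f : BQ ℤ_[p]) : SolubleMod 0 f :=
  ⟨⟨0, 0, 0, 0, 0⟩, .of_eval_eq_sq (x := 1) (y := 0) (z := 0) (by simp) (by simp [BQ.eval]),
    by simp [CongMod]⟩

theorem SolubleMod.mono {i j : ℕ} (hij : i ≤ j) {f : BQ ℤ_[p]} (h : SolubleMod j f) :
    SolubleMod i f :=
  have ⟨g, hg, hfg⟩ := h
  ⟨g, hg, hfg.mono hij⟩

theorem CongMod.solubleMod_iff {j : ℕ} {f g : BQ ℤ_[p]} (h : CongMod j f g) :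
    SolubleMod j f ↔ SolubleMod j g :=
  ⟨fun ⟨k, hk, hfk⟩ => ⟨k, hk, h.symm.trans hfk⟩, fun ⟨k, hk, hgk⟩ => ⟨k, hk, h.trans hgk⟩⟩

theorem SolubleMod.twist {j : ℕ} {f : BQ ℤ_[p]} (h : SolubleMod j f) {m : Mat2 ℤ_[p]}
    (hm : IsUnit m.det) : SolubleMod j (f.twist m) :=
  have ⟨g, hg, hfg⟩ := h
  ⟨g.twist m, hg.twist hm, hfg.twist m⟩

theorem solubleMod_twist_iff {j : ℕ} {f : BQ ℤ_[p]} {m : Mat2 ℤ_[p]} (hm : IsUnit m.det) :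
    SolubleMod j (f.twist m) ↔ SolubleMod j f := by
  refine ⟨fun h => ?_, fun h => h.twist hm⟩
  rw [← BQ.twist_twist_adjugate hm f]
  exact h.twist (m.det_adjugate ▸ hm)

theorem SolubleMod.exists_pow_dvd_subst_a_sub_sq {j : ℕ} {f : BQ ℤ_[p]} (h : SolubleMod j f) :
    ∃ m : Mat2 ℤ_[p], m.det = 1 ∧ ∃ z, (p : ℤ_[p]) ^ j ∣ (f.subst m).a - z ^ 2 := by
  obtain ⟨g, hg, hfg⟩ := h
  obtain ⟨m, hm, z, hz⟩ := solubleP_iff_exists_subst_a_eq_sq.mp hg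
  exact ⟨m, hm, z, hz ▸ (hfg.subst m).1⟩

end Solubility

section Hensel

theorem norm_lt_sq_norm_of_pow_dvd {n N : ℕ} (hn : 2 * n ≤ N + 1) {x y : ℤ_[p]}
    (hx : (p : ℤ_[p]) ^ N ∣ x) (hy : ¬ (p : ℤ_[p]) ^ n ∣ y) : ‖x‖ < ‖y‖ ^ 2 := by
  have hp : (1 : ℝ) < p := mod_cast (Fact.out : p.Prime).one_lt
  have hp0 : (p : ℝ) ≠ 0 := by positivity
  rw [← Ideal.mem_span_singleton, ← PadicInt.norm_le_pow_iff_mem_span_pow] at hx hy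
  rw [PadicInt.norm_le_pow_iff_norm_lt_pow_add_one, not_lt] at hy
  calc ‖x‖ ≤ (p : ℝ) ^ (-N : ℤ) := hx
    _ < (p : ℝ) ^ ((-n + 1) * 2 : ℤ) := zpow_lt_zpow_right₀ hp (by lia)
    _ = ((p : ℝ) ^ (-n + 1 : ℤ)) ^ 2 := by rw [zpow_mul]; norm_cast
    _ ≤ ‖y‖ ^ 2 := by gcongr

theorem exists_root_of_pow_dvd {n N : ℕ} (hn : 2 * n ≤ N + 1) {F : Polynomial ℤ_[p]} {t : ℤ_[p]}
    (hF : (p : ℤ_[p]) ^ N ∣ F.eval t) (hF' : ¬ (p : ℤ_[p]) ^ n ∣ F.derivative.eval t) :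
    ∃ s, F.eval s = 0 := by
  obtain ⟨s, hs, -⟩ := hensels_lemma (R := ℤ_[p]) (F := F) (a := t)
    (by simpa using norm_lt_sq_norm_of_pow_dvd hn hF hF')
  exact ⟨s, by simpa using hs⟩

theorem pow_dvd_two_mul_of_not_solubleP {f : BQ ℤ_[p]} (hf : ¬ SolubleP f) {n N : ℕ}
    (hn : 2 * n ≤ N + 1) {z : ℤ_[p]} (h : (p : ℤ_[p]) ^ N ∣ f.a - z ^ 2) :
    (p : ℤ_[p]) ^ n ∣ 2 * z := by
  by_contra hz
  obtain ⟨w, hw⟩ := exists_root_of_pow_dvd hn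
    (F := .X ^ 2 - .C f.a) (t := z) (by simpa using dvd_sub_comm.mp h)
    (by simpa [one_add_one_eq_two] using hz)
  refine hf (.of_eval_eq_sq (x := 1) (y := 0) (z := w) (by simp) ?_)
  exact f.eval_one_zero.trans (sub_eq_zero.mp (by simpa using hw)).symm

theorem pow_dvd_b_of_not_solubleP {f : BQ ℤ_[p]} (hf : ¬ SolubleP f) {n N : ℕ}
    (hn : 2 * n ≤ N + 1) {z : ℤ_[p]} (h : (p : ℤ_[p]) ^ N ∣ f.a - z ^ 2) :
    (p : ℤ_[p]) ^ n ∣ f.b := by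
  by_contra hb
  obtain ⟨t, ht⟩ := exists_root_of_pow_dvd hn (t := 0)
    (F := .C (f.a - z ^ 2) + .C f.b * .X + .C f.c * .X ^ 2 + .C f.d * .X ^ 3 + .C f.e * .X ^ 4)
    (by simpa [-map_sub] using h)
    (by simpa [-map_sub] using hb)
  refine hf (.of_eval_eq_sq (x := 1) (y := t) (z := z) (by simp) ?_)
  simp only [Polynomial.eval_add, Polynomial.eval_mul, Polynomial.eval_C, Polynomial.eval_pow,
    Polynomial.eval_X] at ht
  simp only [BQ.eval]
  linear_combination ht

end Hensel

section ResidueField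

theorem toZMod_eq_zero_iff_dvd {x : ℤ_[p]} : PadicInt.toZMod x = 0 ↔ (p : ℤ_[p]) ∣ x := by
  rw [← RingHom.mem_ker, PadicInt.ker_toZMod, PadicInt.maximalIdeal_eq_span_p,
    Ideal.mem_span_singleton]

theorem exists_toZMod_eq (x : ZMod p) : ∃ t : ℤ_[p], PadicInt.toZMod t = x :=
  ZMod.ringHom_surjective PadicInt.toZMod x

theorem exists_dvd_sub_sq_of_isSquare_toZMod {x : ℤ_[p]} (h : IsSquare (PadicInt.toZMod x)) :
    ∃ z, (p : ℤ_[p]) ∣ x - z ^ 2 := by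
  obtain ⟨w, hw⟩ := h
  obtain ⟨z, rfl⟩ := exists_toZMod_eq w
  exact ⟨z, by rw [← toZMod_eq_zero_iff_dvd, map_sub, hw, map_pow, sq, sub_self]⟩

end ResidueField

section OddPrime

theorem not_dvd_two (hp : p ≠ 2) : ¬ (p : ℤ_[p]) ∣ 2 := by
  rw [← toZMod_eq_zero_iff_dvd, map_ofNat]
  exact Ring.two_ne_zero (by rwa [ZMod.ringChar_zmod_n])

theorem pow_dvd_a_of_not_solubleP (hp : p ≠ 2) {f : BQ ℤ_[p]} (hf : ¬ SolubleP f) {n N : ℕ}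
    (hnN : N ≤ 2 * n) (hn : 2 * n ≤ N + 1) {z : ℤ_[p]} (h : (p : ℤ_[p]) ^ N ∣ f.a - z ^ 2) :
    (p : ℤ_[p]) ^ N ∣ f.a := by
  have hz : (p : ℤ_[p]) ^ n ∣ z := PadicInt.prime_p.pow_dvd_of_dvd_mul_left n (not_dvd_two hp)
    (pow_dvd_two_mul_of_not_solubleP hf hn h)
  have hz2 : (p : ℤ_[p]) ^ N ∣ z ^ 2 :=
    (pow_dvd_pow _ hnN).trans (by rw [mul_comm, pow_mul]; exact pow_dvd_pow_of_dvd hz 2)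
  exact (dvd_sub_left hz2).mp h

theorem dvd_a_and_dvd_b_of_not_solubleP (hp : p ≠ 2) {f : BQ ℤ_[p]} (hf : ¬ SolubleP f)
    {z : ℤ_[p]} (h : (p : ℤ_[p]) ∣ f.a - z ^ 2) : (p : ℤ_[p]) ∣ f.a ∧ (p : ℤ_[p]) ∣ f.b := by
  rw [← pow_one (p : ℤ_[p])] at h ⊢
  exact ⟨pow_dvd_a_of_not_solubleP (n := 1) hp hf one_le_two le_rfl h,
    pow_dvd_b_of_not_solubleP hf le_rfl h⟩

/-- Otherwise the conic `z² = a x² + b x y + c y²` would have a smooth point modulo `p`, which lifts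
to a point of `z² = f(x, y)`. -/
theorem dvd_b_sq_sub_of_not_solubleP (hp : p ≠ 2) {f : BQ ℤ_[p]} (hf : ¬ SolubleP f)
    (hd : (p : ℤ_[p]) ∣ f.d) (he : (p : ℤ_[p]) ∣ f.e) :
    (p : ℤ_[p]) ∣ f.b ^ 2 - 4 * f.a * f.c := by
  by_contra hdisc
  rw [← toZMod_eq_zero_iff_dvd] at hdisc
  obtain ⟨t₀, z₀, h⟩ := exists_quadratic_eq_sq (by rwa [ZMod.ringChar_zmod_n])
    (show PadicInt.toZMod f.b ^ 2 - 4 * PadicInt.toZMod f.a * PadicInt.toZMod f.c ≠ 0 by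
      simpa [map_ofNat] using hdisc)
  obtain ⟨t, rfl⟩ := exists_toZMod_eq t₀
  obtain ⟨z, hz⟩ := exists_dvd_sub_sq_of_isSquare_toZMod (x := f.a + f.b * t + f.c * t ^ 2)
    ⟨z₀, by rw [← sq, ← h]; simp⟩
  let g := f.subst ⟨1, t, 0, 1⟩
  have hga : g.a = f.a + f.b * t + f.c * t ^ 2 + f.d * t ^ 3 + f.e * t ^ 4 := by
    simp [g, BQ.subst]
  have hgb : g.b = f.b + 2 * f.c * t + 3 * f.d * t ^ 2 + 4 * f.e * t ^ 3 := by
    simp [g, BQ.subst]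
  have hg : ¬ SolubleP g := fun hg => hf (hg.of_subst (by simp [Mat2.det]))
  obtain ⟨ha, hb⟩ := dvd_a_and_dvd_b_of_not_solubleP hp hg (z := z) <| by
    convert dvd_add hz (dvd_add (hd.mul_right (t ^ 3)) (he.mul_right (t ^ 4))) using 1
    rw [hga]
    ring
  rw [← toZMod_eq_zero_iff_dvd] at ha hb hd he
  simp only [hga, hgb, map_add, map_mul, map_pow, map_ofNat, hd, he] at ha hb
  refine hdisc ?_
  simp only [map_sub, map_mul, map_pow, map_ofNat]
  linear_combination (PadicInt.toZMod f.b + 2 * PadicInt.toZMod f.c * PadicInt.toZMod t) * hb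
    - 4 * PadicInt.toZMod f.c * ha

theorem dvd_d_sq_sub_of_not_solubleP (hp : p ≠ 2) {f : BQ ℤ_[p]} (hf : ¬ SolubleP f)
    (ha : (p : ℤ_[p]) ∣ f.a) (hb : (p : ℤ_[p]) ∣ f.b) :
    (p : ℤ_[p]) ∣ f.d ^ 2 - 4 * f.c * f.e := by
  have hswap : ¬ SolubleP (f.subst ⟨0, 1, 1, 0⟩) := fun h => hf (h.of_subst (by simp [Mat2.det]))
  rw [BQ.subst_swap] at hswap
  convert dvd_b_sq_sub_of_not_solubleP hp hswap hb ha using 1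
  ring

/-- Write `f = P² a₁ x⁴ + P b₁ x³y + ⋯` with `P = p ^ n`. Then `f(x, P y) = P² g(x, y)` with
`g ≡ x² (a₁ x² + b₁ x y + c y²)` modulo `p`. -/
theorem pow_succ_dvd_b_sq_sub_of_not_solubleP (hp : p ≠ 2) {f : BQ ℤ_[p]} (hf : ¬ SolubleP f)
    {n : ℕ} (hn : n ≠ 0) (ha : (p : ℤ_[p]) ^ (2 * n) ∣ f.a) (hb : (p : ℤ_[p]) ^ n ∣ f.b) :
    (p : ℤ_[p]) * ((p : ℤ_[p]) ^ n) ^ 2 ∣ f.b ^ 2 - 4 * f.a * f.c := by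
  have hpP : (p : ℤ_[p]) ∣ (p : ℤ_[p]) ^ n := dvd_pow_self _ hn
  have hP0 : (p : ℤ_[p]) ^ n ≠ 0 := pow_ne_zero n PadicInt.prime_p.ne_zero
  rw [mul_comm, pow_mul] at ha
  set P := (p : ℤ_[p]) ^ n
  obtain ⟨a₁, ha₁⟩ := ha
  obtain ⟨b₁, hb₁⟩ := hb
  have hfg : f.subst ⟨1, 0, 0, P⟩ = BQ.rsmul (P ^ 2) ⟨a₁, b₁, f.c, P * f.d, P ^ 2 * f.e⟩ := by
    ext <;> simp only [BQ.subst, BQ.rsmul, ha₁, hb₁] <;> ring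
  have hdisc := dvd_b_sq_sub_of_not_solubleP hp
    (fun hg => hf (hg.of_subst_eq_rsmul_sq (by simpa [Mat2.det]) hfg))
    (hpP.mul_right f.d) ((dvd_pow hpP two_ne_zero).mul_right f.e)
  convert mul_dvd_mul_right hdisc (P ^ 2) using 1
  rw [ha₁, hb₁]
  ring

theorem pow_dvd_disc_of_pow_dvd_a_sub_sq (hp : p ≠ 2) {f : BQ ℤ_[p]} (hf : ¬ SolubleP f) {n : ℕ}
    {z : ℤ_[p]} (hn : (p : ℤ_[p]) ^ (2 * n) ∣ f.a - z ^ 2) (h : (p : ℤ_[p]) ∣ f.a - z ^ 2) :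
    (p : ℤ_[p]) ^ (2 * (n + 1)) ∣ f.disc := by
  have haP := pow_dvd_a_of_not_solubleP hp hf le_rfl (Nat.le_succ _) hn
  have hbP := pow_dvd_b_of_not_solubleP hf (Nat.le_succ _) hn
  obtain ⟨ha, hb⟩ := dvd_a_and_dvd_b_of_not_solubleP hp hf h
  have hdce := dvd_d_sq_sub_of_not_solubleP hp hf ha hb
  rw [mul_comm, pow_mul, pow_succ' _ n]
  rcases eq_or_ne n 0 with rfl | hn0
  · refine BQ.sq_dvd_disc_of_outer_quadratics (by simpa using ha) hbP hb ?_ hdce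
    simpa using dvd_sub (dvd_pow hb two_ne_zero) ((ha.mul_left 4).mul_right f.c)
  · refine BQ.sq_dvd_disc_of_outer_quadratics ?_ hbP hb
      (pow_succ_dvd_b_sq_sub_of_not_solubleP hp hf hn0 haP hbP) hdce
    rw [← pow_succ']
    exact (pow_dvd_pow _ (by lia)).trans haP

theorem sq_dvd_disc_of_depressed_of_forall_not_dvd_sub_sq (hp : p ≠ 2) {f : BQ ℤ_[p]}
    (hb : f.b = 0) (h_inf : ∀ z, ¬ (p : ℤ_[p]) ∣ f.a - z ^ 2)
    (h : ∀ t z, ¬ (p : ℤ_[p]) ∣ f.eval t 1 - z ^ 2) : (p : ℤ_[p]) ^ 2 ∣ f.disc := by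
  obtain ⟨hd, hace⟩ := depressed_quartic_of_forall_not_isSquare (K := ZMod p)
    (a := PadicInt.toZMod f.a) (c := PadicInt.toZMod f.c) (d := PadicInt.toZMod f.d)
    (e := PadicInt.toZMod f.e) (by rwa [ZMod.ringChar_zmod_n])
    (fun hsq => have ⟨z, hz⟩ := exists_dvd_sub_sq_of_isSquare_toZMod hsq; h_inf z hz)
    (fun x hsq => by
      obtain ⟨t, rfl⟩ := exists_toZMod_eq x
      obtain ⟨z, hz⟩ := exists_dvd_sub_sq_of_isSquare_toZMod (x := f.eval t 1)
        (by simpa [BQ.eval, hb] using hsq)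
      exact h t z hz)
  refine BQ.sq_dvd_disc_of_depressed hb (toZMod_eq_zero_iff_dvd.mp hd)
    (toZMod_eq_zero_iff_dvd.mp ?_)
  simp only [map_sub, map_mul, map_pow, map_ofNat]
  linear_combination hace

theorem isUnit_of_not_dvd {x : ℤ_[p]} (hx : ¬ (p : ℤ_[p]) ∣ x) : IsUnit x := by
  rw [← PadicInt.norm_lt_one_iff_dvd, not_lt] at hx
  exact PadicInt.isUnit_iff.mpr (le_antisymm x.norm_le_one hx)

theorem sq_dvd_disc_of_forall_not_dvd_sub_sq (hp : p ≠ 2) {f : BQ ℤ_[p]}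
    (h_inf : ∀ z, ¬ (p : ℤ_[p]) ∣ f.a - z ^ 2)
    (h : ∀ t z, ¬ (p : ℤ_[p]) ∣ f.eval t 1 - z ^ 2) : (p : ℤ_[p]) ^ 2 ∣ f.disc := by
  have h4a : IsUnit (4 * f.a) := by
    refine .mul ?_ (isUnit_of_not_dvd (by simpa using h_inf 0))
    rw [show (4 : ℤ_[p]) = 2 * 2 by norm_num]
    exact (isUnit_of_not_dvd (not_dvd_two hp)).mul (isUnit_of_not_dvd (not_dvd_two hp))
  obtain ⟨s, hs⟩ := h4a.dvd (a := -f.b)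
  rw [← BQ.disc_subst_of_det_eq_one (m := ⟨1, 0, s, 1⟩) (by simp [Mat2.det]) f]
  refine sq_dvd_disc_of_depressed_of_forall_not_dvd_sub_sq hp ?_ ?_ fun t z => ?_
  · simp only [BQ.subst]
    linear_combination -hs
  · simpa [BQ.subst] using h_inf
  · rw [BQ.eval_subst]
    simpa using h (t + s) z

end OddPrime

section EvenPrime

theorem exists_two_dvd_sub_sq (x : ℤ_[2]) : ∃ z, 2 ∣ x - z ^ 2 := by
  have hx : IsSquare (PadicInt.toZMod x) := by
    generalize PadicInt.toZMod x = y
    revert y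
    decide
  simpa using exists_dvd_sub_sq_of_isSquare_toZMod hx

theorem two_dvd_b_of_not_solubleP {f : BQ ℤ_[2]} (hf : ¬ SolubleP f) : 2 ∣ f.b := by
  obtain ⟨z, hz⟩ := exists_two_dvd_sub_sq f.a
  simpa using pow_dvd_b_of_not_solubleP (n := 1) (N := 1) hf le_rfl (by simpa using hz)

theorem two_dvd_d_of_not_solubleP {f : BQ ℤ_[2]} (hf : ¬ SolubleP f) : 2 ∣ f.d := by
  have hswap : ¬ SolubleP (f.subst ⟨0, 1, 1, 0⟩) := fun h => hf (h.of_subst (by simp [Mat2.det]))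
  simpa [BQ.subst_swap] using two_dvd_b_of_not_solubleP hswap

theorem two_pow_dvd_disc_of_two_pow_dvd_a_sub_sq {f : BQ ℤ_[2]} (hf : ¬ SolubleP f) {n : ℕ}
    {z : ℤ_[2]} (h : 2 ^ (2 * (n + 1)) ∣ f.a - z ^ 2) : 2 ^ (2 * (n + 1)) ∣ f.disc := by
  have hz : (2 : ℤ_[2]) ^ n ∣ z := by
    have := pow_dvd_two_mul_of_not_solubleP (n := n + 1) hf (Nat.le_succ _) (mod_cast h)
    rw [pow_succ', Nat.cast_ofNat] at this
    exact (mul_dvd_mul_iff_left two_ne_zero).mp this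
  have hb : (2 : ℤ_[2]) ^ (n + 1) ∣ f.b :=
    mod_cast pow_dvd_b_of_not_solubleP hf (Nat.le_succ _) (mod_cast h)
  have ha : ((2 : ℤ_[2]) ^ n) ^ 2 ∣ f.a :=
    (dvd_sub_left (pow_dvd_pow_of_dvd hz 2)).mp
      (.trans (by rw [← pow_mul]; exact pow_dvd_pow 2 (by lia)) h)
  rw [pow_succ'] at hb
  rw [mul_comm, pow_mul, pow_succ' _ n]
  exact BQ.two_mul_sq_dvd_disc ha hb (two_dvd_d_of_not_solubleP hf)

end EvenPrime

section Discriminant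

theorem pow_dvd_disc_of_solubleMod_of_ne_two (hp : p ≠ 2) {f : BQ ℤ_[p]} (hf : ¬ SolubleP f)
    {n : ℕ} (h : SolubleMod (2 * n) f) : (p : ℤ_[p]) ^ (2 * (n + 1)) ∣ f.disc := by
  by_cases hsq : ∃ m : Mat2 ℤ_[p], m.det = 1 ∧
      ∃ z, (p : ℤ_[p]) ^ (2 * n) ∣ (f.subst m).a - z ^ 2 ∧ (p : ℤ_[p]) ∣ (f.subst m).a - z ^ 2
  · obtain ⟨m, hm, z, hn, hz⟩ := hsq
    rw [← BQ.disc_subst_of_det_eq_one hm f]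
    exact pow_dvd_disc_of_pow_dvd_a_sub_sq hp
      (fun hfm => hf (hfm.of_subst (hm ▸ one_ne_zero))) hn hz
  · rcases eq_or_ne n 0 with rfl | hn
    · push Not at hsq
      refine sq_dvd_disc_of_forall_not_dvd_sub_sq hp (fun z hz => ?_) (fun t z hz => ?_)
      · exact hsq ⟨1, 0, 0, 1⟩ (by simp [Mat2.det]) z (by simp) (by rwa [BQ.subst_one])
      · exact hsq ⟨t, 1, -1, 0⟩ (by simp [Mat2.det]) z (by simp) hz
    · obtain ⟨m, hm, z, hz⟩ := h.exists_pow_dvd_subst_a_sub_sq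
      exact absurd ⟨m, hm, z, hz, (dvd_pow_self _ (by lia)).trans hz⟩ hsq

theorem two_pow_dvd_disc_of_solubleMod {f : BQ ℤ_[2]} (hf : ¬ SolubleP f) {n : ℕ}
    (h : SolubleMod (2 * n) f) : 2 ^ (2 * n) ∣ f.disc := by
  rcases n with - | n
  · simp
  · obtain ⟨m, hm, z, hz⟩ := h.exists_pow_dvd_subst_a_sub_sq
    rw [← BQ.disc_subst_of_det_eq_one hm f]
    exact two_pow_dvd_disc_of_two_pow_dvd_a_sub_sq
      (fun hfm => hf (hfm.of_subst (hm ▸ one_ne_zero))) (mod_cast hz)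

theorem pow_dvd_disc_of_solubleMod {f : BQ ℤ_[p]} (hf : ¬ SolubleP f) {n : ℕ}
    (h : SolubleMod (2 * n) f) : (p : ℤ_[p]) ^ (2 * n) ∣ f.disc := by
  rcases eq_or_ne p 2 with rfl | hp
  · exact mod_cast two_pow_dvd_disc_of_solubleMod hf h
  · exact (pow_dvd_pow _ (by lia)).trans (pow_dvd_disc_of_solubleMod_of_ne_two hp hf h)

end Discriminant

section Approximation

theorem LP_of_solubleMod {k : ℕ} {f : BQ ℤ_[p]} (h : SolubleMod (2 * k) f) : LP k f = 1 :=
  if_pos h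

theorem LP_of_not_solubleMod {k : ℕ} {f : BQ ℤ_[p]} (h : ¬ SolubleMod (2 * k) f) : LP k f = 0 :=
  if_neg h

theorem LP_eq_one_or_eq_zero (k : ℕ) (f : BQ ℤ_[p]) : LP k f = 1 ∨ LP k f = 0 :=
  ite_eq_or_eq _ _ _

theorem LP_congr {k : ℕ} {f g : BQ ℤ_[p]} (h : SolubleMod (2 * k) f ↔ SolubleMod (2 * k) g) :
    LP k f = LP k g :=
  if_congr h rfl rfl

theorem abs_ellPk_le_one (k : ℕ) (f : BQ ℤ_[p]) : |ellPk k f| ≤ 1 := by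
  rcases k with - | k
  · rcases LP_eq_one_or_eq_zero 0 f with h | h <;> simp [ellPk, h]
  · rcases LP_eq_one_or_eq_zero (k + 1) f with h | h <;>
      rcases LP_eq_one_or_eq_zero k f with h' | h' <;> simp [ellPk, h, h']

theorem ellPk_congr {k : ℕ} {f g : BQ ℤ_[p]}
    (h : ∀ j ≤ k, SolubleMod (2 * j) f ↔ SolubleMod (2 * j) g) : ellPk k f = ellPk k g := by
  rcases k with - | k
  · exact LP_congr (h 0 le_rfl)
  · exact congrArg₂ (· - ·) (LP_congr (h (k + 1) le_rfl)) (LP_congr (h k (Nat.le_succ k)))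

theorem sum_range_succ_ellPk (n : ℕ) (f : BQ ℤ_[p]) :
    ∑ k ∈ Finset.range (n + 1), ellPk k f = LP n f := by
  induction n with
  | zero => simp [ellPk]
  | succ n ih => rw [Finset.sum_range_succ, ih, ellPk, add_sub_cancel]

theorem exists_forall_ge_LP_eq_ellP {f : BQ ℤ_[p]} (hf : f.disc ≠ 0) :
    ∃ n, ∀ k ≥ n, LP k f = ellP f := by
  by_cases hsol : SolubleP f
  · exact ⟨0, fun k _ => by rw [LP_of_solubleMod (hsol.solubleMod _), ellP, if_pos hsol]⟩
  · obtain ⟨n, hn⟩ := FiniteMultiplicity.of_prime_left PadicInt.prime_p hf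
    refine ⟨n + 1, fun k hk => ?_⟩
    rw [ellP, if_neg hsol]
    exact LP_of_not_solubleMod fun h =>
      hn ((pow_dvd_pow _ (by lia)).trans (pow_dvd_disc_of_solubleMod hsol h))

theorem hasSum_ellPk {f : BQ ℤ_[p]} (hf : f.disc ≠ 0) :
    HasSum (fun k => ellPk k f) (ellP f) := by
  obtain ⟨n, hn⟩ := exists_forall_ge_LP_eq_ellP hf
  rw [← hn n le_rfl, ← sum_range_succ_ellPk]
  refine hasSum_sum_of_ne_finset_zero fun k hk => ?_
  rw [Finset.mem_range] at hk
  obtain ⟨k, rfl⟩ := Nat.exists_eq_add_one_of_ne_zero (n := k) (by lia)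
  rw [ellPk, hn (k + 1) (by lia), hn k (by lia), sub_self]

theorem not_solubleP_and_solubleMod_of_ellPk_succ_ne_zero {k : ℕ} {f : BQ ℤ_[p]}
    (h : ellPk (k + 1) f ≠ 0) : ¬ SolubleP f ∧ SolubleMod (2 * k) f := by
  rw [ellPk, sub_ne_zero] at h
  refine ⟨fun hf => h ?_, ?_⟩
  · rw [LP_of_solubleMod (hf.solubleMod _), LP_of_solubleMod (hf.solubleMod _)]
  · by_contra hk
    refine h ?_
    rw [LP_of_not_solubleMod hk, LP_of_not_solubleMod fun hk' => hk (hk'.mono (by lia))]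

end Approximation

/-- The periodic approximations `ℓ_p^{(k)}` of the local solubility
function `ℓ_p`: (i) `L_p^{(0)} ≡ 1` and `|ℓ_p^{(k)}| ≤ 1`; (ii) each `ℓ_p^{(k)}` is defined
modulo `p^{2k}` and is `PGL₂(ℤ_p)`-invariant; (iii) for `Δ(f) ≠ 0` the series
`Σ_k ℓ_p^{(k)}(f)` sums to `ℓ_p(f)`; (iv) for `k ≥ 1`, the support of `ℓ_p^{(k)}` consists of
forms with `p^{2k} ∣ Δ(f)` for odd `p`, and `2^{2k−2} ∣ Δ(f)` for `p = 2`. -/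
theorem solubility_approximation (p : ℕ) [Fact p.Prime] :
    (∀ f : BQ ℤ_[p], LP 0 f = 1) ∧
    (∀ (k : ℕ) (f : BQ ℤ_[p]), |ellPk k f| ≤ 1) ∧
    (∀ (k : ℕ) (f g : BQ ℤ_[p]), CongMod (2 * k) f g → ellPk k f = ellPk k g) ∧
    (∀ (k : ℕ) (m : Mat2 ℤ_[p]) (f : BQ ℤ_[p]), IsUnit m.det →
        ellPk k (f.twist m) = ellPk k f) ∧
    (∀ f : BQ ℤ_[p], f.disc ≠ 0 → HasSum (fun k => ellPk k f) (ellP f)) ∧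
    (∀ (k : ℕ) (f : BQ ℤ_[p]), 1 ≤ k → ellPk k f ≠ 0 →
        (p ≠ 2 → (p : ℤ_[p]) ^ (2 * k) ∣ f.disc) ∧
        (p = 2 → (p : ℤ_[p]) ^ (2 * k - 2) ∣ f.disc)) := by
  refine ⟨fun f => LP_of_solubleMod (solubleMod_zero f), abs_ellPk_le_one, fun k f g h => ?_,
    fun k m f hm => ellPk_congr fun j _ => solubleMod_twist_iff hm, fun f => hasSum_ellPk,
    fun k f hk hne => ?_⟩
  · exact ellPk_congr fun j hj => (h.mono (by lia)).solubleMod_iff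
  · obtain ⟨k, rfl⟩ := Nat.exists_eq_add_of_le' hk
    obtain ⟨hf, hmod⟩ := not_solubleP_and_solubleMod_of_ellPk_succ_ne_zero hne
    exact ⟨fun hp => pow_dvd_disc_of_solubleMod_of_ne_two hp hf hmod,
      fun _ => pow_dvd_disc_of_solubleMod hf hmod⟩

end BQPaper
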